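/- arXiv:1306.4141 — 4 statements merged into one kernel-verified Lean document; each statement's English description precedes it below -/
import Mathlib

section
/- Let n ≥ 1 and let P, Q ∈ ℂ[X] be coprime polynomials with deg P = deg Q = n. Let p be the number of distinct complex roots of P and q the number of distinct complex roots of Q. Then P ≠ Q and deg(P − Q) ≥ (n + 1) − (p + q), i.e. deg(P − Q) + p + q ≥ n + 1. -/
open Polynomial

/-!
Apply the Mason–Stothers theorem to `P + (-Q) + (Q - P) = 0`: since `P` has nonzero derivative,
`deg P` is less than the degree of the radical of `P * Q * (P - Q)`. The radicals of `P` and `Q`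
contribute one to this degree for each distinct root, and the radical of `P - Q` contributes at most
`deg (P - Q)`.
-/

theorem derivative_eq_zero_of_isUnit {R : Type*} [Semiring R] [NoZeroDivisors R] {p : R[X]}
    (hp : IsUnit p) : derivative p = 0 :=
  derivative_of_natDegree_zero (natDegree_eq_zero_of_isUnit hp)

theorem ne_of_isCoprime_of_derivative_ne_zero {R : Type*} [CommSemiring R] [NoZeroDivisors R]
    {P Q : R[X]} (hcop : IsCoprime P Q) (hP : derivative P ≠ 0) : P ≠ Q := by
  rintro rfl
  exact hP (derivative_eq_zero_of_isUnit (isCoprime_self.1 hcop))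

theorem nodup_roots_of_squarefree {R : Type*} [CommRing R] [IsDomain R] {p : R[X]}
    (hp : Squarefree p) : p.roots.Nodup := by
  classical
  refine Multiset.nodup_iff_count_le_one.2 fun a => ?_
  rw [count_roots]
  by_contra! hmult
  have hsq : (X - C a) * (X - C a) ∣ p :=
    pow_two (X - C a) ▸ (le_rootMultiplicity_iff hp.ne_zero).1 hmult
  exact not_isUnit_X_sub_C a (hp _ hsq)

section

open UniqueFactorizationMonoid

variable {k : Type*} [Field k] [DecidableEq k]

theorem roots_radical (p : k[X]) : (radical p).roots = p.roots.dedup := by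
  rcases eq_or_ne p 0 with rfl | hp
  · simp
  refine (Multiset.Nodup.ext (nodup_roots_of_squarefree squarefree_radical)
    (Multiset.nodup_dedup _)).2 fun a => ?_
  rw [Multiset.mem_dedup, mem_roots radical_ne_zero, mem_roots hp, ← dvd_iff_isRoot,
    ← dvd_iff_isRoot, dvd_radical_iff_of_irreducible (irreducible_X_sub_C a) hp]

theorem natDegree_radical_of_splits {p : k[X]} (hp : p.Splits) :
    (radical p).natDegree = p.roots.toFinset.card := by
  rcases eq_or_ne p 0 with rfl | hp0
  · simp
  · rw [(hp.of_dvd hp0 radical_dvd_self).natDegree_eq_card_roots, roots_radical,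
      Multiset.card_toFinset]

theorem natDegree_radical_mul_le (p q : k[X]) :
    (radical (p * q)).natDegree ≤ (radical p).natDegree + (radical q).natDegree := by
  rw [← natDegree_mul radical_ne_zero radical_ne_zero]
  exact natDegree_le_of_dvd radical_mul_dvd (mul_ne_zero radical_ne_zero radical_ne_zero)

theorem natDegree_lt_natDegree_sub_add_natDegree_radical {P Q : k[X]} (hcop : IsCoprime P Q)
    (hP : derivative P ≠ 0) :
    P.natDegree < (P - Q).natDegree + (radical P).natDegree + (radical Q).natDegree := by
  have hP0 : P ≠ 0 := by
    rintro rfl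
    exact hP derivative_zero
  have hQ0 : Q ≠ 0 := by
    rintro rfl
    exact hP (derivative_eq_zero_of_isUnit (isCoprime_zero_right.1 hcop))
  have hsub : Q - P ≠ 0 := sub_ne_zero.2 (ne_of_isCoprime_of_derivative_ne_zero hcop hP).symm
  obtain ⟨hlt, -, -⟩ | ⟨hP', -, -⟩ :=
    Polynomial.abc hP0 (neg_ne_zero.2 hQ0) hsub hcop.neg_right (by ring)
  · calc
      P.natDegree < (radical (P * -Q * (Q - P))).natDegree := hlt
      _ ≤ (radical (P * -Q)).natDegree + (radical (Q - P)).natDegree :=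
        natDegree_radical_mul_le _ _
      _ ≤ (radical P).natDegree + (radical (-Q)).natDegree + (Q - P).natDegree :=
        add_le_add (natDegree_radical_mul_le _ _) natDegree_radical_le
      _ = (P - Q).natDegree + (radical P).natDegree + (radical Q).natDegree := by
        rw [UniqueFactorizationDomain.radical_neg, natDegree_sub]
        ring
  · exact absurd hP' hP

theorem stmt0_general {P Q : k[X]} (hPs : P.Splits) (hQs : Q.Splits) (hcop : IsCoprime P Q)
    (hP : derivative P ≠ 0) :
    P ≠ Q ∧ (P - Q).natDegree + P.roots.toFinset.card + Q.roots.toFinset.card ≥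
      P.natDegree + 1 := by
  refine ⟨ne_of_isCoprime_of_derivative_ne_zero hcop hP, ?_⟩
  rw [← natDegree_radical_of_splits hPs, ← natDegree_radical_of_splits hQs]
  exact natDegree_lt_natDegree_sub_add_natDegree_radical hcop hP

end

/-- Davenport-type bound: for coprime `P, Q ∈ ℂ[X]` of equal degree `n ≥ 1`,
with `p` and `q` distinct roots respectively, `P ≠ Q` and
`deg (P - Q) ≥ (n + 1) - (p + q)`. -/
theorem stmt0 (n : ℕ) (hn : 1 ≤ n) (P Q : ℂ[X])
    (hcop : IsCoprime P Q)
    (hP : P.natDegree = n) (hQ : Q.natDegree = n) :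
    P ≠ Q ∧
      (P - Q).natDegree + P.roots.toFinset.card + Q.roots.toFinset.card ≥ n + 1 := by
  subst hP
  exact stmt0_general (IsAlgClosed.splits P) (IsAlgClosed.splits Q) hcop
    (derivative_ne_zero.2 (Nat.one_le_iff_ne_zero.1 hn))
end

section
/- Let n ≥ 1 and let P, Q ∈ ℂ[X] be coprime monic polynomials of degree n, and set R = P − Q (which is nonzero). Let p, q, r denote the numbers of distinct complex roots of P, Q, R respectively (with r = 0 if R is a nonzero constant). For y ∈ ℂ let n_y denote the number of distinct complex roots of the polynomial (1 − y)·P + y·Q (which is monic of degree n). Then n_y = n for all but finitely many y ∈ ℂ, and r = (n + 1) − (p + q) + Σ_{y ∈ ℂ \ {0,1}} (n − n_y), where the sum has only finitely many nonzero terms. -/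
open Polynomial

/-!
Put `R = P - Q`, so that `(1 - y) P + y Q = P - y R` has as its roots the fibre over `y` of the
rational function `P / R`. The Wronskian `W` of `P` and `R` is also the Wronskian of `P - y R` and
`R`, so at a root of any `P - y R`, or of `R`, of multiplicity `m` it vanishes to order exactly
`m - 1`. Hence `n - n_y` counts the roots of `W` lying over `y`, and `deg R - r` those lying over
`∞`. Every root of `W` lies over exactly one point, and `deg W = n + deg R - 1`; summing over all
`y` gives `∑ (n - n_y) = n - 1 + r`, whose terms at `y = 0, 1` are `n - p` and `n - q`.
-/

section Finsum

variable {α M : Type*} [AddCommMonoid M]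

theorem finsum_eq_add_add_finsum_mem_ne {a b : α} (hab : a ≠ b) {f : α → M}
    (hf : f.support.Finite) :
    ∑ᶠ x, f x = f a + f b + ∑ᶠ x ∈ {x | x ≠ a ∧ x ≠ b}, f x := by
  have hcompl : {x | x ≠ a ∧ x ≠ b} = Set.univ \ {a, b} := by ext; simp
  rw [hcompl, ← finsum_mem_pair hab,
    finsum_mem_add_sdiff' (Set.subset_univ _) (hf.subset Set.inter_subset_right), finsum_mem_univ]

end Finsum

section WronskianDegree

theorem coeff_X_mul_derivative {A : Type*} [Semiring A] (p : A[X]) (k : ℕ) :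
    (X * derivative p).coeff k = p.coeff k * k := by
  cases k with
  | zero => simp
  | succ k => rw [coeff_X_mul, coeff_derivative, Nat.cast_succ]

theorem natDegree_X_mul_derivative_le {A : Type*} [Semiring A] (p : A[X]) :
    (X * derivative p).natDegree ≤ p.natDegree := by
  refine natDegree_le_iff_coeff_eq_zero.2 fun k hk => ?_
  rw [coeff_X_mul_derivative, coeff_eq_zero_of_natDegree_lt hk, zero_mul]

variable {A : Type*} [CommRing A]

theorem coeff_X_mul_wronskian (F G : A[X]) :
    (X * wronskian F G).coeff (F.natDegree + G.natDegree) =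
      F.leadingCoeff * G.leadingCoeff * (G.natDegree - F.natDegree) := by
  have hX : X * wronskian F G = F * (X * derivative G) - X * derivative F * G := by
    rw [wronskian]; ring
  rw [hX, coeff_sub,
    coeff_mul_add_eq_of_natDegree_le le_rfl (natDegree_X_mul_derivative_le G),
    coeff_mul_add_eq_of_natDegree_le (natDegree_X_mul_derivative_le F) le_rfl,
    coeff_X_mul_derivative, coeff_X_mul_derivative]
  simp only [coeff_natDegree]
  ring

variable [IsDomain A] [CharZero A] {F G : A[X]}

theorem coeff_X_mul_wronskian_ne_zero (hF : F ≠ 0) (hG : G ≠ 0)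
    (hdeg : F.natDegree ≠ G.natDegree) :
    (X * wronskian F G).coeff (F.natDegree + G.natDegree) ≠ 0 := by
  rw [coeff_X_mul_wronskian]
  exact mul_ne_zero (mul_ne_zero (leadingCoeff_ne_zero.2 hF) (leadingCoeff_ne_zero.2 hG))
    (sub_ne_zero.2 (Nat.cast_injective.ne hdeg.symm))

theorem wronskian_ne_zero_of_natDegree_ne (hF : F ≠ 0) (hG : G ≠ 0)
    (hdeg : F.natDegree ≠ G.natDegree) : wronskian F G ≠ 0 := by
  intro hW
  apply coeff_X_mul_wronskian_ne_zero hF hG hdeg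
  rw [hW, mul_zero, coeff_zero]

theorem natDegree_wronskian_add_one (hF : F ≠ 0) (hG : G ≠ 0)
    (hdeg : F.natDegree ≠ G.natDegree) :
    (wronskian F G).natDegree + 1 = F.natDegree + G.natDegree := by
  have hW := wronskian_ne_zero_of_natDegree_ne hF hG hdeg
  refine le_antisymm (natDegree_wronskian_lt_add hW) ?_
  rw [← natDegree_X_mul hW]
  exact le_natDegree_of_ne_zero (coeff_X_mul_wronskian_ne_zero hF hG hdeg)

end WronskianDegree

section WronskianRoots

theorem rootMultiplicity_sub_of_pow_dvd {A : Type*} [CommRing A] {p q : A[X]} {a : A}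
    (hq : q ≠ 0) (hp : (X - C a) ^ (rootMultiplicity a q + 1) ∣ p) :
    rootMultiplicity a (p - q) = rootMultiplicity a q := by
  have hq_not_dvd : ¬(X - C a) ^ (rootMultiplicity a q + 1) ∣ q :=
    (rootMultiplicity_le_iff hq a _).1 le_rfl
  have hpq : p - q ≠ 0 := fun h => hq_not_dvd (by rwa [sub_eq_zero.1 h] at hp)
  refine le_antisymm ((rootMultiplicity_le_iff hpq a _).2 ?_) ((le_rootMultiplicity_iff hpq).2 ?_)
  · rwa [dvd_sub_right hp]
  · exact dvd_sub ((pow_dvd_pow _ (Nat.le_succ _)).trans hp) (pow_rootMultiplicity_dvd q a)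

theorem not_isRoot_of_isCoprime {A : Type*} [CommSemiring A] [Nontrivial A] {F G : A[X]}
    (hcop : IsCoprime F G) {a : A} (hFa : F.IsRoot a) : ¬G.IsRoot a := by
  simpa [hFa.eq_zero] using aeval_ne_zero_of_isCoprime hcop a

variable {A : Type*} [CommRing A] [IsDomain A]

theorem rootMultiplicity_wronskian_add_one [CharZero A] {F G : A[X]} {a : A} (hF : F ≠ 0)
    (hFa : F.IsRoot a) (hGa : ¬G.IsRoot a) :
    rootMultiplicity a (wronskian F G) + 1 = rootMultiplicity a F := by
  have hpos : 0 < rootMultiplicity a F := (rootMultiplicity_pos hF).2 hFa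
  have hF' : derivative F ≠ 0 := by
    intro h
    rw [eq_C_of_derivative_eq_zero h] at hF hFa
    simp_all
  have hF'G : derivative F * G ≠ 0 := mul_ne_zero hF' fun h => hGa (by simp [h])
  have hmult : rootMultiplicity a (derivative F * G) + 1 = rootMultiplicity a F := by
    rw [rootMultiplicity_mul hF'G, derivative_rootMultiplicity_of_root hFa,
      rootMultiplicity_eq_zero hGa, add_zero, Nat.sub_add_cancel hpos]
  rw [wronskian, rootMultiplicity_sub_of_pow_dvd hF'G, hmult]
  rw [hmult]
  exact (pow_rootMultiplicity_dvd F a).mul_right _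

variable [DecidableEq A]

theorem sum_rootMultiplicity_eq_natDegree {F : A[X]} (hF : F.Splits) :
    ∑ a ∈ F.roots.toFinset, rootMultiplicity a F = F.natDegree := by
  simp_rw [← count_roots, Multiset.toFinset_sum_count_eq, hF.natDegree_eq_card_roots]

theorem sum_roots_rootMultiplicity_eq_sum_filter {F : A[X]} (hF : F ≠ 0) (W : A[X]) :
    ∑ a ∈ F.roots.toFinset, rootMultiplicity a W =
      ∑ a ∈ W.roots.toFinset with F.IsRoot a, rootMultiplicity a W := by
  symm
  apply Finset.sum_subset
  · intro a ha
    simpa [hF] using (Finset.mem_filter.1 ha).2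
  · intro a haF haW
    by_contra hne
    have haW' : a ∈ W.roots := mem_roots'.2 (rootMultiplicity_pos'.1 (Nat.pos_of_ne_zero hne))
    have hFa : F.IsRoot a := isRoot_of_mem_roots (Multiset.mem_toFinset.1 haF)
    exact haW (Finset.mem_filter.2 ⟨Multiset.mem_toFinset.2 haW', hFa⟩)

theorem card_roots_add_sum_rootMultiplicity_wronskian [CharZero A] {F G : A[X]} (hF : F ≠ 0)
    (hsplits : F.Splits) (hcop : IsCoprime F G) :
    F.roots.toFinset.card +
      ∑ a ∈ (wronskian F G).roots.toFinset with F.IsRoot a, rootMultiplicity a (wronskian F G) =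
      F.natDegree := by
  rw [← sum_roots_rootMultiplicity_eq_sum_filter hF (wronskian F G),
    ← sum_rootMultiplicity_eq_natDegree hsplits, Finset.card_eq_sum_ones,
    ← Finset.sum_add_distrib]
  refine Finset.sum_congr rfl fun a ha => ?_
  have hFa : F.IsRoot a := by simpa [hF] using ha
  rw [add_comm, rootMultiplicity_wronskian_add_one hF hFa (not_isRoot_of_isCoprime hcop hFa)]

end WronskianRoots

section Pencil

theorem wronskian_sub_C_mul {A : Type*} [CommRing A] (P R : A[X]) (y : A) :
    wronskian (P - C y * R) R = wronskian P R := by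
  simp only [wronskian, derivative_sub, derivative_C_mul]
  ring

theorem natDegree_sub_C_mul {A : Type*} [Ring A] {P R : A[X]} (hdeg : R.natDegree < P.natDegree)
    (y : A) : (P - C y * R).natDegree = P.natDegree :=
  natDegree_sub_eq_left_of_natDegree_lt ((natDegree_C_mul_le y R).trans_lt hdeg)

theorem isCoprime_sub_mul_self {A : Type*} [CommRing A] {p r : A} (hcop : IsCoprime p r) (c : A) :
    IsCoprime (p - c * r) r := by
  simpa [sub_eq_add_neg] using hcop.add_mul_right_left (-c)

theorem isCoprime_self_sub {A : Type*} [CommRing A] {p q : A} (hcop : IsCoprime p q) :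
    IsCoprime p (p - q) := by
  simpa [neg_add_eq_sub] using hcop.neg_right.add_mul_left_right 1

theorem sub_ne_zero_of_isCoprime {A : Type*} [CommRing A] {p q : A} (hcop : IsCoprime p q)
    (hp : ¬IsUnit p) : p - q ≠ 0 := by
  intro h
  obtain rfl := sub_eq_zero.1 h
  exact hp (isCoprime_self.1 hcop)

theorem natDegree_sub_lt_of_leadingCoeff_eq {A : Type*} [Ring A] {P Q : A[X]}
    (hdeg : P.natDegree = Q.natDegree) (hlead : P.leadingCoeff = Q.leadingCoeff)
    (hPQ : P - Q ≠ 0) : (P - Q).natDegree < P.natDegree := by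
  have hP : P ≠ 0 := by
    rintro rfl
    have hQ : Q = 0 := leadingCoeff_eq_zero.1 (by rw [← hlead, leadingCoeff_zero])
    exact hPQ (by rw [hQ, sub_zero])
  have hQ : Q ≠ 0 := leadingCoeff_ne_zero.1 (hlead ▸ leadingCoeff_ne_zero.2 hP)
  have hdegree : P.degree = Q.degree := by
    rw [degree_eq_natDegree hP, degree_eq_natDegree hQ, hdeg]
  exact natDegree_lt_natDegree hPQ (degree_sub_lt_left hdegree hP hlead)

theorem card_roots_toFinset_le_natDegree {A : Type*} [CommRing A] [IsDomain A] [DecidableEq A]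
    (F : A[X]) : F.roots.toFinset.card ≤ F.natDegree :=
  F.roots.toFinset_card_le.trans F.card_roots'

variable {K : Type*} [Field K] {P R : K[X]}

theorem isRoot_sub_C_mul_iff (hcop : IsCoprime P R) {a y : K} :
    (P - C y * R).IsRoot a ↔ ¬R.IsRoot a ∧ P.eval a / R.eval a = y := by
  have hnot (h : (P - C y * R).IsRoot a) : ¬R.IsRoot a :=
    not_isRoot_of_isCoprime (isCoprime_sub_mul_self hcop (C y)) h
  rw [← and_iff_right_of_imp hnot]
  refine and_congr_right fun hRa => ?_
  rw [div_eq_iff hRa, IsRoot, eval_sub, eval_C_mul, sub_eq_zero]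

variable [DecidableEq K]

theorem sum_filter_isRoot_add_finsum_sum_filter_isRoot {M : Type*} [AddCommMonoid M]
    (hcop : IsCoprime P R) (s : Finset K) (f : K → M) :
    ∑ a ∈ s with R.IsRoot a, f a + ∑ᶠ y, ∑ a ∈ s with (P - C y * R).IsRoot a, f a =
      ∑ a ∈ s, f a := by
  simp_rw [isRoot_sub_C_mul_iff hcop, ← Finset.filter_filter]
  rw [finsum_sum_filter, Finset.sum_filter_add_sum_filter_not]

variable [IsAlgClosed K] [CharZero K]

theorem card_roots_pencil_add_sum_rootMultiplicity_wronskian (hcop : IsCoprime P R)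
    (hdeg : R.natDegree < P.natDegree) (y : K) :
    (P - C y * R).roots.toFinset.card +
      ∑ a ∈ (wronskian P R).roots.toFinset with (P - C y * R).IsRoot a,
        rootMultiplicity a (wronskian P R) = P.natDegree := by
  have hF := natDegree_sub_C_mul hdeg y
  have hF0 : P - C y * R ≠ 0 := ne_zero_of_natDegree_gt (hdeg.trans_eq hF.symm)
  simpa only [wronskian_sub_C_mul, hF] using
    card_roots_add_sum_rootMultiplicity_wronskian hF0 (IsAlgClosed.splits _)
      (isCoprime_sub_mul_self hcop (C y))

theorem finite_setOf_card_roots_pencil_ne (hcop : IsCoprime P R)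
    (hdeg : R.natDegree < P.natDegree) :
    {y : K | (P - C y * R).roots.toFinset.card ≠ P.natDegree}.Finite := by
  refine ((wronskian P R).roots.toFinset.image fun a => P.eval a / R.eval a).finite_toSet.subset
    fun y hy => ?_
  have hsum : ∑ a ∈ (wronskian P R).roots.toFinset with (P - C y * R).IsRoot a,
      rootMultiplicity a (wronskian P R) ≠ 0 := fun h =>
    hy (by simpa only [h, add_zero] using
      card_roots_pencil_add_sum_rootMultiplicity_wronskian hcop hdeg y)
  obtain ⟨a, ha, -⟩ := Finset.exists_ne_zero_of_sum_ne_zero hsum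
  obtain ⟨haW, haF⟩ := Finset.mem_filter.1 ha
  exact Finset.mem_coe.2 (Finset.mem_image.2 ⟨a, haW, ((isRoot_sub_C_mul_iff hcop).1 haF).2⟩)

theorem finsum_natDegree_sub_card_roots_pencil (hcop : IsCoprime P R)
    (hdeg : R.natDegree < P.natDegree) :
    ∑ᶠ y : K, (P.natDegree - (P - C y * R).roots.toFinset.card) + 1 =
      P.natDegree + R.roots.toFinset.card := by
  have hP : P ≠ 0 := ne_zero_of_natDegree_gt hdeg
  have hR : R ≠ 0 := by
    rintro rfl
    have hPdeg := natDegree_eq_zero_of_isUnit (isCoprime_zero_right.1 hcop)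
    exact Nat.not_lt_zero _ (hPdeg ▸ hdeg)
  have hover_infinity : R.roots.toFinset.card +
      ∑ a ∈ (wronskian P R).roots.toFinset with R.IsRoot a,
        rootMultiplicity a (wronskian P R) = R.natDegree := by
    have hWneg : wronskian R (-P) = wronskian P R := by rw [wronskian_neg_right, wronskian_neg_eq]
    simpa only [hWneg] using card_roots_add_sum_rootMultiplicity_wronskian hR
      (IsAlgClosed.splits R) hcop.symm.neg_right
  have hover (y : K) : P.natDegree - (P - C y * R).roots.toFinset.card =
      ∑ a ∈ (wronskian P R).roots.toFinset with (P - C y * R).IsRoot a,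
        rootMultiplicity a (wronskian P R) := by
    rw [← card_roots_pencil_add_sum_rootMultiplicity_wronskian hcop hdeg y,
      Nat.add_sub_cancel_left]
  have htotal := sum_filter_isRoot_add_finsum_sum_filter_isRoot hcop
    (wronskian P R).roots.toFinset fun a => rootMultiplicity a (wronskian P R)
  rw [sum_rootMultiplicity_eq_natDegree (IsAlgClosed.splits _)] at htotal
  have hWdeg := natDegree_wronskian_add_one hP hR hdeg.ne'
  simp_rw [hover]
  omega

end Pencil

theorem stmt1_general {K : Type*} [Field K] [IsAlgClosed K] [CharZero K] [DecidableEq K]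
    (n : ℕ) (hn : 1 ≤ n) (P Q : K[X]) (hcop : IsCoprime P Q)
    (hlead : P.leadingCoeff = Q.leadingCoeff) (hP : P.natDegree = n) (hQ : Q.natDegree = n) :
    P - Q ≠ 0 ∧
    {y : K | ((1 - C y) * P + C y * Q).roots.toFinset.card ≠ n}.Finite ∧
    (P - Q).roots.toFinset.card + (P.roots.toFinset.card + Q.roots.toFinset.card)
      = (n + 1) +
        ∑ᶠ y ∈ {y : K | y ≠ 0 ∧ y ≠ 1},
          (n - ((1 - C y) * P + C y * Q).roots.toFinset.card) := by
  subst hP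
  have hR : P - Q ≠ 0 :=
    sub_ne_zero_of_isCoprime hcop (not_isUnit_of_natDegree_pos P hn)
  have hdeg := natDegree_sub_lt_of_leadingCoeff_eq hQ.symm hlead hR
  have hfinite := finite_setOf_card_roots_pencil_ne (isCoprime_self_sub hcop) hdeg
  have htotal := finsum_natDegree_sub_card_roots_pencil (isCoprime_self_sub hcop) hdeg
  rw [finsum_eq_add_add_finsum_mem_ne zero_ne_one
    (hfinite.subset fun y hy h => hy (by simp [h]))] at htotal
  simp only [map_zero, map_one, zero_mul, one_mul, sub_zero, sub_sub_cancel] at htotal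
  have hpencil (y : K) : (1 - C y) * P + C y * Q = P - C y * (P - Q) := by ring
  simp_rw [hpencil]
  refine ⟨hR, hfinite, ?_⟩
  have hp := card_roots_toFinset_le_natDegree P
  have hq := card_roots_toFinset_le_natDegree Q
  omega

/-- Riemann–Hurwitz-type count of the distinct roots of `R = P - Q`:
`r = (n + 1) - (p + q) + Σ_{y ∉ {0,1}} (n - n_y)`, where
`n_y` is the number of distinct roots of `(1 - y)·P + y·Q`. -/
theorem stmt1 (n : ℕ) (hn : 1 ≤ n) (P Q : ℂ[X])
    (hcop : IsCoprime P Q) (hPm : P.Monic) (hQm : Q.Monic)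
    (hP : P.natDegree = n) (hQ : Q.natDegree = n) :
    P - Q ≠ 0 ∧
    {y : ℂ | ((1 - C y) * P + C y * Q).roots.toFinset.card ≠ n}.Finite ∧
    (P - Q).roots.toFinset.card + (P.roots.toFinset.card + Q.roots.toFinset.card)
      = (n + 1) +
        ∑ᶠ y ∈ {y : ℂ | y ≠ 0 ∧ y ≠ 1},
          (n - ((1 - C y) * P + C y * Q).roots.toFinset.card) :=
  stmt1_general n hn P Q hcop (hPm.leadingCoeff.trans hQm.leadingCoeff.symm) hP hQ
end

section
/- For every integer k ≥ 1 there exist coprime monic polynomials A, B ∈ ℂ[X] with deg A = 2k and deg B = 3k such that deg(A³ − B²) = k + 1. -/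
open Polynomial

/-!
Let `K` be proportional to `A ^ 3 - B ^ 2`. Comparing logarithmic derivatives leads to the system
`3 A' K - A K' = l B`, `2 B' K - B K' = l A ^ 2` with a constant `l`. Eliminating `B`, one finds
`l ^ 2 A = K' ^ 2 + K E`, where `E` satisfies a quadratic differential equation with `K`. For
`k = n + 1` its coefficients give `2 n` equations in the `2 n + 1` free coefficients of a monic `K`
without subleading term and of `E` with prescribed leading coefficient. They have the trivial
solution `K = X ^ (n + 2)`, `E = c X ^ n`, hence by Krull's height theorem a second one.

Conversely, a solution of the system makes the Wronskian of `A ^ 3 - B ^ 2` and `K` vanish, so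
`A ^ 3 - B ^ 2 = c K` for a constant `c`. If `c = 0`, then comparing orders of vanishing shows that
`A` and `K` are powers of a single linear form, which is the trivial solution. If `c ≠ 0`, the
orders of vanishing at a common root of `A` and `B` are incompatible, so `A` and `B` are coprime.
-/

theorem height_eq_natCard_of_isMaximal {σ F : Type*} [Finite σ] [Field F]
    (M : Ideal (MvPolynomial σ F)) [M.IsMaximal] : M.height = Nat.card σ := by
  induction σ using Finite.induction_empty_option with
  | of_equiv e ih =>
    have hM := Ideal.comap_isMaximal_of_equiv (MvPolynomial.renameEquiv F e) (p := M)
    rw [← Nat.card_congr e, ← ih (M.comap (MvPolynomial.renameEquiv F e))]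
    exact ((MvPolynomial.renameEquiv F e).toRingEquiv.height_comap M).symm
  | h_empty =>
    let e := (MvPolynomial.isEmptyRingEquiv F PEmpty).symm
    have hbot : M.comap e = ⊥ := Ideal.eq_bot_of_prime _
    rw [← e.height_comap M, hbot, Ideal.height_bot, Nat.card_of_isEmpty, Nat.cast_zero]
  | @h_option τ _ ih =>
    let e := (MvPolynomial.optionEquivLeft F τ).symm.toRingEquiv
    let N : Ideal (MvPolynomial τ F)[X] := M.comap e
    let p : Ideal (MvPolynomial τ F) := N.under _
    have hN : N.IsMaximal := Ideal.comap_isMaximal_of_equiv e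
    have hp : p.IsMaximal := Polynomial.isMaximal_comap_C_of_isJacobsonRing N
    have hNp : N.LiesOver p := ⟨rfl⟩
    rw [← e.height_comap M, Polynomial.height_eq_height_add_one p N, ih p, Finite.card_option,
      Nat.cast_add_one]

/- If `x` were the only common zero, its maximal ideal, of height `Nat.card σ`, would be a minimal
prime over the `Nat.card ι` polynomials. -/
theorem exists_ne_forall_eval_eq_zero {σ ι F : Type*} [Finite σ] [Finite ι] [Field F]
    [IsAlgClosed F] (f : ι → MvPolynomial σ F) (hcard : Nat.card ι < Nat.card σ) {x : σ → F}
    (hx : ∀ i, MvPolynomial.eval x (f i) = 0) :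
    ∃ y ≠ x, ∀ i, MvPolynomial.eval y (f i) = 0 := by
  by_contra! hunique
  let I : Ideal (MvPolynomial σ F) := Ideal.span (Set.range f)
  let M : Ideal (MvPolynomial σ F) := MvPolynomial.vanishingIdeal F {x}
  have hlocus : MvPolynomial.zeroLocus F I = {x} := by
    ext y
    simp only [I, MvPolynomial.zeroLocus_span, Set.forall_mem_range, Set.mem_ofPred_eq,
      Set.mem_singleton_iff]
    refine ⟨fun hy => ?_, fun hy => hy ▸ hx⟩
    by_contra hyx
    obtain ⟨i, hi⟩ := hunique y hyx
    exact hi (hy i)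
  have hM : M.IsMaximal := MvPolynomial.isMaximal_iff_eq_vanishingIdeal_singleton.2 ⟨x, rfl⟩
  have hradical : M = I.radical := by
    rw [← MvPolynomial.vanishingIdeal_zeroLocus_eq_radical (K := F) I, hlocus]
  have hminimal : M ∈ I.minimalPrimes := by
    rw [← Ideal.radical_minimalPrimes, ← hradical, Ideal.minimalPrimes_eq_subsingleton_self]
    rfl
  have hheight : (Nat.card σ : ℕ∞) ≤ (Set.range f).ncard := by
    rw [← height_eq_natCard_of_isMaximal M]
    exact Ideal.height_le_card_of_mem_minimalPrimes_span (Set.finite_range f) hminimal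
  have hrange : (Set.range f).ncard ≤ Nat.card ι := Finite.card_range_le f
  have := Nat.cast_le.1 hheight
  omega

section TopCoefficients

variable {R : Type*} [CommSemiring R] {p q : R[X]} {a b : ℕ}

/- The factor `X ^ i` restores the degree lost to the derivatives, so that no truncated subtraction
occurs. -/
theorem natDegree_X_pow_mul_iterate_derivative_le (hp : p.natDegree ≤ a) (i : ℕ) :
    (X ^ i * derivative^[i] p).natDegree ≤ a := by
  rw [natDegree_le_iff_coeff_eq_zero]
  intro m hm
  rw [coeff_X_pow_mul']
  split_ifs with him
  · rw [coeff_iterate_derivative, Nat.sub_add_cancel him,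
      coeff_eq_zero_of_natDegree_lt (hp.trans_lt hm), smul_zero]
  · rfl

theorem coeff_X_pow_mul_iterate_derivative (p : R[X]) (a i : ℕ) :
    (X ^ i * derivative^[i] p).coeff a = a.descFactorial i * p.coeff a := by
  rw [coeff_X_pow_mul']
  split_ifs with hia
  · rw [coeff_iterate_derivative, Nat.sub_add_cancel hia, nsmul_eq_mul]
  · rw [Nat.descFactorial_of_lt (not_le.1 hia), Nat.cast_zero, zero_mul]

theorem X_pow_mul_iterate_derivative_mul (p q : R[X]) (i j : ℕ) :
    X ^ (i + j) * (derivative^[i] p * derivative^[j] q) =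
      X ^ i * derivative^[i] p * (X ^ j * derivative^[j] q) := by
  ring

theorem natDegree_iterate_derivative_mul_le (hp : p.natDegree ≤ a) (hq : q.natDegree ≤ b)
    {i j N : ℕ} (hN : N + (i + j) = a + b) :
    (derivative^[i] p * derivative^[j] q).natDegree ≤ N := by
  rw [natDegree_le_iff_coeff_eq_zero]
  intro m hm
  rw [← coeff_X_pow_mul _ (i + j), X_pow_mul_iterate_derivative_mul]
  refine coeff_eq_zero_of_natDegree_lt (lt_of_le_of_lt ?_ (hN ▸ Nat.add_lt_add_right hm (i + j)))
  exact natDegree_mul_le_of_le (natDegree_X_pow_mul_iterate_derivative_le hp i)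
    (natDegree_X_pow_mul_iterate_derivative_le hq j)

theorem coeff_iterate_derivative_mul (hp : p.natDegree ≤ a) (hq : q.natDegree ≤ b)
    {i j N : ℕ} (hN : N + (i + j) = a + b) :
    (derivative^[i] p * derivative^[j] q).coeff N =
      a.descFactorial i * p.coeff a * (b.descFactorial j * q.coeff b) := by
  rw [← coeff_X_pow_mul _ (i + j), X_pow_mul_iterate_derivative_mul, hN,
    coeff_mul_add_eq_of_natDegree_le (natDegree_X_pow_mul_iterate_derivative_le hp i)
      (natDegree_X_pow_mul_iterate_derivative_le hq j),
    coeff_X_pow_mul_iterate_derivative, coeff_X_pow_mul_iterate_derivative]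

theorem pow_dvd_iterate_derivative_mul {r : R[X]} (hp : r ^ a ∣ p) (hq : r ^ b ∣ q)
    {i j N : ℕ} (hN : N + (i + j) ≤ a + b) : r ^ N ∣ derivative^[i] p * derivative^[j] q := by
  refine (pow_dvd_pow r (show N ≤ (a - i) + (b - j) by omega)).trans ?_
  rw [pow_add]
  exact mul_dvd_mul (pow_sub_dvd_iterate_derivative_of_pow_dvd i hp)
    (pow_sub_dvd_iterate_derivative_of_pow_dvd j hq)

end TopCoefficients

section Obstruction

variable {R : Type*} [CommRing R] {K E : R[X]} {n : ℕ}

/-- The differential operator obtained by eliminating `B` from `DavenportSystem l K A B`, which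
becomes `K * davenportOperator K A = A * (l ^ 2 * A - K' ^ 2)`. -/
noncomputable def davenportOperator (K A : R[X]) : R[X] :=
  6 * derivative^[2] A * K + derivative A * derivative K - 2 * A * derivative^[2] K

/-- The obstruction to `A = K' ^ 2 + K * E` being a solution of `davenportOperator K A = A * E`.
Each term carries two derivatives for every factor `K`, so it has degree at most `2 * n` when
`deg K ≤ n + 2` and `deg E ≤ n`. -/
noncomputable def davenportObstruction (K E : R[X]) : R[X] :=
  E * E - 4 * (E * derivative^[2] K) - 13 * (derivative K * derivative E)
    - 12 * (derivative^[2] K * derivative^[2] K) - 12 * (derivative K * derivative^[3] K)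
    - 6 * (K * derivative^[2] E)

theorem davenportOperator_C_mul (K A : R[X]) (c : R) :
    davenportOperator K (C c * A) = C c * davenportOperator K A := by
  simp only [davenportOperator, iterate_derivative_C_mul, derivative_C_mul]
  ring

theorem davenportOperator_sq_add_mul (K E : R[X]) :
    davenportOperator K (derivative K ^ 2 + K * E) =
      (derivative K ^ 2 + K * E) * E - K * davenportObstruction K E := by
  simp only [davenportOperator, davenportObstruction, Function.iterate_succ_apply,
    Function.iterate_zero_apply, derivative_add, derivative_mul, derivative_sq, map_ofNat,
    derivative_ofNat]
  ring

theorem map_davenportObstruction {S : Type*} [CommRing S] (f : R →+* S) (K E : R[X]) :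
    (davenportObstruction K E).map f = davenportObstruction (K.map f) (E.map f) := by
  simp [davenportObstruction, derivative_map]

theorem natDegree_davenportObstruction_le (hK : K.natDegree ≤ n + 2) (hE : E.natDegree ≤ n) :
    (davenportObstruction K E).natDegree ≤ 2 * n := by
  have hsub {p q : R[X]} (c : ℕ) (hp : p.natDegree ≤ 2 * n) (hq : q.natDegree ≤ 2 * n) :
      (p - c * q).natDegree ≤ 2 * n :=
    (natDegree_sub_le_of_le hp ((natDegree_mul_le_of_le (natDegree_natCast c).le hq).trans_eq
      (zero_add _))).trans_eq (max_self _)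
  refine hsub 6 (hsub 12 (hsub 12 (hsub 13 (hsub 4 ?_ ?_) ?_) ?_) ?_) ?_
  · exact natDegree_iterate_derivative_mul_le (i := 0) (j := 0) hE hE (by omega)
  · exact natDegree_iterate_derivative_mul_le (i := 0) (j := 2) hE hK (by omega)
  · exact natDegree_iterate_derivative_mul_le (i := 1) (j := 1) hK hE (by omega)
  · exact natDegree_iterate_derivative_mul_le (i := 2) (j := 2) hK hK (by omega)
  · exact natDegree_iterate_derivative_mul_le (i := 1) (j := 3) hK hK (by omega)
  · exact natDegree_iterate_derivative_mul_le (i := 0) (j := 2) hK hE (by omega)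

theorem coeff_davenportObstruction (hK : K.natDegree ≤ n + 2) (hE : E.natDegree ≤ n) :
    (davenportObstruction K E).coeff (2 * n) =
      (E.coeff n - 12 * (n + 1) * (2 * n + 1) * K.coeff (n + 2)) *
        (E.coeff n + (n + 2) ^ 2 * K.coeff (n + 2)) := by
  have hEE := coeff_iterate_derivative_mul (i := 0) (j := 0) (N := 2 * n) hE hE (by omega)
  have hEK'' := coeff_iterate_derivative_mul (i := 0) (j := 2) (N := 2 * n) hE hK (by omega)
  have hK'E' := coeff_iterate_derivative_mul (i := 1) (j := 1) (N := 2 * n) hK hE (by omega)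
  have hK''K'' := coeff_iterate_derivative_mul (i := 2) (j := 2) (N := 2 * n) hK hK (by omega)
  have hK'K''' := coeff_iterate_derivative_mul (i := 1) (j := 3) (N := 2 * n) hK hK (by omega)
  have hKE'' := coeff_iterate_derivative_mul (i := 0) (j := 2) (N := 2 * n) hK hE (by omega)
  simp only [Function.iterate_zero_apply, Function.iterate_one, Nat.descFactorial_zero,
    Nat.descFactorial_one, Nat.cast_descFactorial_two, Nat.succ_descFactorial_succ, Nat.cast_mul,
    Nat.cast_add, Nat.cast_one, one_mul] at hEE hEK'' hK'E' hK''K'' hK'K''' hKE''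
  simp only [davenportObstruction, coeff_sub, coeff_ofNat_mul, hEE, hEK'', hK'E', hK''K'', hK'K''',
    hKE'']
  ring

theorem X_pow_dvd_davenportObstruction (hK : X ^ (n + 2) ∣ K) (hE : X ^ n ∣ E) :
    X ^ (2 * n) ∣ davenportObstruction K E := by
  refine ((((dvd_sub ?_ ?_).sub ?_).sub ?_).sub ?_).sub ?_
  · exact pow_dvd_iterate_derivative_mul (i := 0) (j := 0) hE hE (by omega)
  · exact (pow_dvd_iterate_derivative_mul (i := 0) (j := 2) hE hK (by omega)).mul_left 4
  · exact (pow_dvd_iterate_derivative_mul (i := 1) (j := 1) hK hE (by omega)).mul_left 13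
  · exact (pow_dvd_iterate_derivative_mul (i := 2) (j := 2) hK hK (by omega)).mul_left 12
  · exact (pow_dvd_iterate_derivative_mul (i := 1) (j := 3) hK hK (by omega)).mul_left 12
  · exact (pow_dvd_iterate_derivative_mul (i := 0) (j := 2) hK hE (by omega)).mul_left 6

theorem coeff_davenportObstruction_X_pow_monomial (c : R) {j : ℕ} (hj : j < 2 * n) :
    (davenportObstruction (X ^ (n + 2)) (monomial n c)).coeff j = 0 := by
  have hdvd : X ^ n ∣ monomial n c := by
    rw [← C_mul_X_pow_eq_monomial]
    exact dvd_mul_left _ _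
  exact X_pow_dvd_iff.1 (X_pow_dvd_davenportObstruction dvd_rfl hdvd) j hj

theorem davenportObstruction_eq_zero_of_forall_coeff (hK : K.natDegree ≤ n + 2)
    (hE : E.natDegree ≤ n) (htop : E.coeff n = 12 * (n + 1) * (2 * n + 1) * K.coeff (n + 2))
    (hcoeff : ∀ j < 2 * n, (davenportObstruction K E).coeff j = 0) :
    davenportObstruction K E = 0 := by
  ext j
  rw [coeff_zero]
  rcases lt_trichotomy j (2 * n) with hj | rfl | hj
  · exact hcoeff j hj
  · rw [coeff_davenportObstruction hK hE, htop, sub_self, zero_mul]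
  · exact coeff_eq_zero_of_natDegree_lt ((natDegree_davenportObstruction_le hK hE).trans_lt hj)

end Obstruction

section LowerTerms

variable {R : Type*} [Semiring R] {d m : ℕ}

/-- The polynomial `c X ^ d + w₀ + w₁ X + ⋯ + w_{m - 1} X ^ (m - 1)`, a leading term together with
freely chosen coefficients in low degrees; it has degree at most `d` when `m ≤ d`. -/
noncomputable def withLowerTerms (d : ℕ) (c : R) (w : Fin m → R) : R[X] :=
  monomial d c + ∑ i : Fin m, monomial (i : ℕ) (w i)

theorem withLowerTerms_zero (d : ℕ) (c : R) :
    withLowerTerms d c (0 : Fin m → R) = monomial d c := by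
  simp [withLowerTerms]

theorem map_withLowerTerms {S : Type*} [Semiring S] (f : R →+* S) (d : ℕ) (c : R)
    (w : Fin m → R) : (withLowerTerms d c w).map f = withLowerTerms d (f c) (f ∘ w) := by
  simp [withLowerTerms, Polynomial.map_sum]

theorem coeff_withLowerTerms_of_lt (hm : m ≤ d) (c : R) (w : Fin m → R) (i : Fin m) :
    (withLowerTerms d c w).coeff i = w i := by
  have hid : d ≠ i := (i.isLt.trans_le hm).ne'
  simp [withLowerTerms, coeff_monomial, hid, Fin.val_inj]

theorem coeff_withLowerTerms_of_le {j : ℕ} (hj : m ≤ j) (d : ℕ) (c : R) (w : Fin m → R) :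
    (withLowerTerms d c w).coeff j = if d = j then c else 0 := by
  have hij (i : Fin m) : (i : ℕ) ≠ j := (i.isLt.trans_le hj).ne
  simp [withLowerTerms, coeff_monomial, hij]

theorem natDegree_withLowerTerms_le (hm : m ≤ d) (c : R) (w : Fin m → R) :
    (withLowerTerms d c w).natDegree ≤ d := by
  rw [natDegree_le_iff_coeff_eq_zero]
  intro j hj
  rw [coeff_withLowerTerms_of_le (hm.trans hj.le), if_neg hj.ne]

end LowerTerms

/-- The data from which a solution of Davenport's problem is built: `K` will be proportional to
`A ^ 3 - B ^ 2` and `K' ^ 2 + K * E` to `A`, where `deg A = 2 * (n + 1)` and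
`deg B = 3 * (n + 1)`. The prescribed coefficient of `E` is `(5 * n + 4) ^ 2 - (n + 2) ^ 2`. -/
structure IsDavenportPair {R : Type*} [CommRing R] (n : ℕ) (K E : R[X]) : Prop where
  monic : K.Monic
  natDegree_eq : K.natDegree = n + 2
  natDegree_le : E.natDegree ≤ n
  coeff_eq : E.coeff n = 12 * (n + 1) * (2 * n + 1)
  obstruction_eq_zero : davenportObstruction K E = 0

section Candidates

variable {R S : Type*} [CommRing R] [CommRing S] {n : ℕ}

/-- The monic polynomial of degree `n + 2` without `X ^ (n + 1)`-term, a normalization achieved by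
a translation of `X`, whose lower coefficients are the first `n + 1` entries of `v`. -/
noncomputable def candidateK (v : Fin (n + 1) ⊕ Fin n → R) : R[X] :=
  withLowerTerms (n + 2) 1 (v ∘ Sum.inl)

/-- The polynomial with the `X ^ n`-coefficient required by `IsDavenportPair` whose lower
coefficients are the last `n` entries of `v`. -/
noncomputable def candidateE (v : Fin (n + 1) ⊕ Fin n → R) : R[X] :=
  withLowerTerms n (12 * (n + 1) * (2 * n + 1)) (v ∘ Sum.inr)

theorem map_candidateK (f : R →+* S) (v : Fin (n + 1) ⊕ Fin n → R) :
    (candidateK v).map f = candidateK (f ∘ v) := by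
  rw [candidateK, map_withLowerTerms, map_one, ← Function.comp_assoc, candidateK]

theorem map_candidateE (f : R →+* S) (v : Fin (n + 1) ⊕ Fin n → R) :
    (candidateE v).map f = candidateE (f ∘ v) := by
  simp only [candidateE, map_withLowerTerms, map_mul, map_add, map_one, map_ofNat, map_natCast,
    Function.comp_assoc]

theorem candidateK_zero : candidateK (0 : Fin (n + 1) ⊕ Fin n → R) = X ^ (n + 2) :=
  (withLowerTerms_zero _ _).trans (monomial_one_right_eq_X_pow _)

theorem candidateE_zero :
    candidateE (0 : Fin (n + 1) ⊕ Fin n → R) = monomial n (12 * (n + 1) * (2 * n + 1) : R) :=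
  withLowerTerms_zero _ _

theorem candidate_injective {v w : Fin (n + 1) ⊕ Fin n → R} (hK : candidateK v = candidateK w)
    (hE : candidateE v = candidateE w) : v = w := by
  ext (i | i)
  · simpa only [candidateK, coeff_withLowerTerms_of_lt (show n + 1 ≤ n + 2 by omega),
      Function.comp_apply] using
      congrArg (coeff · i) hK
  · simpa only [candidateE, coeff_withLowerTerms_of_lt le_rfl, Function.comp_apply]
      using congrArg (coeff · i) hE

theorem isDavenportPair_candidate [Nontrivial R] {v : Fin (n + 1) ⊕ Fin n → R}
    (hcoeff : ∀ j < 2 * n, (davenportObstruction (candidateK v) (candidateE v)).coeff j = 0) :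
    IsDavenportPair n (candidateK v) (candidateE v) := by
  have hKdeg : (candidateK v).natDegree ≤ n + 2 := natDegree_withLowerTerms_le (by omega) _ _
  have hKtop : (candidateK v).coeff (n + 2) = 1 := by
    rw [candidateK, coeff_withLowerTerms_of_le (by omega), if_pos rfl]
  have hEdeg : (candidateE v).natDegree ≤ n := natDegree_withLowerTerms_le le_rfl _ _
  have hEtop : (candidateE v).coeff n = 12 * (n + 1) * (2 * n + 1) := by
    rw [candidateE, coeff_withLowerTerms_of_le le_rfl, if_pos rfl]
  exact
    { monic := monic_of_natDegree_le_of_coeff_eq_one _ hKdeg hKtop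
      natDegree_eq := natDegree_eq_of_le_of_coeff_ne_zero hKdeg (hKtop ▸ one_ne_zero)
      natDegree_le := hEdeg
      coeff_eq := hEtop
      obstruction_eq_zero := davenportObstruction_eq_zero_of_forall_coeff hKdeg hEdeg
        (by rw [hEtop, hKtop, mul_one]) hcoeff }

theorem exists_isDavenportPair (F : Type*) [Field F] [IsAlgClosed F] (n : ℕ) :
    ∃ K E : F[X], IsDavenportPair n K E ∧ K.coeff (n + 1) = 0 ∧
      ¬ (K = X ^ (n + 2) ∧ E = monomial n (12 * (n + 1) * (2 * n + 1) : F)) := by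
  let equation (j : Fin (2 * n)) : MvPolynomial (Fin (n + 1) ⊕ Fin n) F :=
    (davenportObstruction (candidateK MvPolynomial.X) (candidateE MvPolynomial.X)).coeff j
  have eval_equation (v : Fin (n + 1) ⊕ Fin n → F) (j : Fin (2 * n)) :
      MvPolynomial.eval v (equation j) =
        (davenportObstruction (candidateK v) (candidateE v)).coeff j := by
    have hX : MvPolynomial.eval v ∘ MvPolynomial.X = v := funext MvPolynomial.eval_X
    rw [← coeff_map, map_davenportObstruction, map_candidateK, map_candidateE, hX]
  have hzero (j : Fin (2 * n)) : MvPolynomial.eval 0 (equation j) = 0 := by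
    rw [eval_equation, candidateK_zero, candidateE_zero]
    exact coeff_davenportObstruction_X_pow_monomial _ j.isLt
  have hcard : Nat.card (Fin (2 * n)) < Nat.card (Fin (n + 1) ⊕ Fin n) := by
    simp only [Nat.card_eq_fintype_card, Fintype.card_fin, Fintype.card_sum]
    omega
  obtain ⟨v, hv, hroot⟩ := exists_ne_forall_eval_eq_zero equation hcard hzero
  refine ⟨candidateK v, candidateE v, isDavenportPair_candidate fun j hj => ?_, ?_, ?_⟩
  · exact (eval_equation v ⟨j, hj⟩).symm.trans (hroot ⟨j, hj⟩)
  · rw [candidateK, coeff_withLowerTerms_of_le le_rfl, if_neg (by omega)]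
  · rintro ⟨hK, hE⟩
    exact hv (candidate_injective (hK.trans candidateK_zero.symm) (hE.trans candidateE_zero.symm))

end Candidates

theorem exists_eq_C_mul_of_wronskian_eq_zero {F : Type*} [Field F] [CharZero F] {f g : F[X]}
    (hg : g ≠ 0) (h : wronskian f g = 0) : ∃ c, f = C c * g := by
  classical
  obtain ⟨f₁, g₁, hf₁, hg₁, hunit⟩ := extract_gcd f g
  have hd : GCDMonoid.gcd f g ≠ 0 := gcd_ne_zero_of_right hg
  generalize GCDMonoid.gcd f g = d at hf₁ hg₁ hd
  have hwronskian : wronskian f₁ g₁ = 0 := by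
    refine (mul_eq_zero.1 ?_).resolve_left (pow_ne_zero 2 hd)
    rw [← h, hf₁, hg₁]
    simp only [wronskian, derivative_mul]
    ring
  obtain ⟨hf', hg'⟩ := ((gcd_isUnit_iff f₁ g₁).1 hunit).wronskian_eq_zero_iff.1 hwronskian
  obtain ⟨a, rfl⟩ := natDegree_eq_zero.1 (derivative_eq_zero.1 hf')
  obtain ⟨b, rfl⟩ := natDegree_eq_zero.1 (derivative_eq_zero.1 hg')
  have hb : b ≠ 0 := by
    rintro rfl
    simp [hg₁] at hg
  refine ⟨a / b, ?_⟩
  rw [hf₁, hg₁, mul_left_comm, ← C_mul, div_mul_cancel₀ a hb]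

section LinearPowers

variable {R : Type*} [CommRing R] [IsDomain R] {f : R[X]} {α : R}

theorem rootMultiplicity_X_sub_C_mul (hf : f ≠ 0) :
    ((X - C α) * f).rootMultiplicity α = f.rootMultiplicity α + 1 := by
  rw [rootMultiplicity_mul (mul_ne_zero (X_sub_C_ne_zero α) hf), rootMultiplicity_X_sub_C_self,
    add_comm]

theorem rootMultiplicity_C_mul {c : R} (hc : c ≠ 0) (f : R[X]) (α : R) :
    (C c * f).rootMultiplicity α = f.rootMultiplicity α := by
  classical rw [← count_roots, roots_C_mul f hc, count_roots]

theorem rootMultiplicity_pow (f : R[X]) (m : ℕ) (α : R) :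
    (f ^ m).rootMultiplicity α = m * f.rootMultiplicity α := by
  classical rw [← count_roots, roots_pow, Multiset.count_nsmul, count_roots]

theorem eq_X_sub_C_pow_of_natDegree_le_rootMultiplicity (hf : f.Monic)
    (hα : f.natDegree ≤ f.rootMultiplicity α) : f = (X - C α) ^ f.natDegree := by
  refine eq_of_monic_of_dvd_of_natDegree_le ((monic_X_sub_C α).pow _) hf ?_ ?_
  · exact (pow_dvd_pow _ hα).trans (pow_rootMultiplicity_dvd f α)
  · rw [natDegree_pow, natDegree_X_sub_C, mul_one]

theorem eq_zero_of_coeff_X_sub_C_pow_eq_zero [CharZero R] {m : ℕ}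
    (h : ((X - C α) ^ (m + 1)).coeff m = 0) : α = 0 := by
  have hcoeff := coeff_X_add_C_pow (-α) (m + 1) m
  rw [C_neg, ← sub_eq_add_neg, h, Nat.add_sub_cancel_left, pow_one, Nat.choose_succ_self_right]
    at hcoeff
  exact neg_eq_zero.1 ((mul_eq_zero.1 hcoeff.symm).resolve_right (mod_cast m.succ_ne_zero))

end LinearPowers

section WeightedWronskian

variable {R : Type*} [CommRing R] {p q : ℕ}

/-- The numerator of the logarithmic derivative of `f ^ p / g ^ q`. -/
noncomputable def weightedWronskian (p q : ℕ) (f g : R[X]) : R[X] :=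
  p * derivative f * g - q * f * derivative g

theorem natDegree_weightedWronskian_le {f g : R[X]} {a b N : ℕ} (hf : f.natDegree ≤ a)
    (hg : g.natDegree ≤ b) (hN : N + 1 = a + b) : (weightedWronskian p q f g).natDegree ≤ N := by
  have hsmul {r : R[X]} (c : ℕ) (hr : r.natDegree ≤ N) : ((c : R[X]) * r).natDegree ≤ N :=
    (natDegree_mul_le_of_le (natDegree_natCast c).le hr).trans_eq (zero_add N)
  rw [weightedWronskian, mul_assoc, mul_assoc]
  refine (natDegree_sub_le_of_le (hsmul p ?_) (hsmul q ?_)).trans_eq (max_self N)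
  · exact natDegree_iterate_derivative_mul_le (i := 1) (j := 0) hf hg hN
  · exact natDegree_iterate_derivative_mul_le (i := 0) (j := 1) hf hg hN

theorem coeff_weightedWronskian {f g : R[X]} {a b N : ℕ} (hf : f.natDegree ≤ a)
    (hg : g.natDegree ≤ b) (hN : N + 1 = a + b) :
    (weightedWronskian p q f g).coeff N = (p * a - q * b) * (f.coeff a * g.coeff b) := by
  have hf'g := coeff_iterate_derivative_mul (i := 1) (j := 0) hf hg hN
  have hfg' := coeff_iterate_derivative_mul (i := 0) (j := 1) hf hg hN
  simp only [Function.iterate_zero_apply, Function.iterate_one, Nat.descFactorial_zero,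
    Nat.descFactorial_one, Nat.cast_one, one_mul] at hf'g hfg'
  rw [weightedWronskian, mul_assoc, mul_assoc, coeff_sub, coeff_natCast_mul, coeff_natCast_mul,
    hf'g, hfg']
  ring

theorem X_sub_C_mul_derivative_X_sub_C_pow_mul (α : R) (m : ℕ) (f : R[X]) :
    (X - C α) * derivative ((X - C α) ^ m * f) =
      (X - C α) ^ m * ((m : R[X]) * f + (X - C α) * derivative f) := by
  rcases m with _ | m
  · simp
  · rw [derivative_mul, derivative_X_sub_C_pow, Nat.add_sub_cancel, C_eq_natCast]
    ring

theorem X_sub_C_mul_weightedWronskian (α : R) (a b : ℕ) (f g : R[X]) :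
    (X - C α) * weightedWronskian p q ((X - C α) ^ a * f) ((X - C α) ^ b * g) =
      (X - C α) ^ (a + b) *
        ((p * a - q * b : R[X]) * (f * g) + (X - C α) * weightedWronskian p q f g) := by
  have hf := X_sub_C_mul_derivative_X_sub_C_pow_mul α a f
  have hg := X_sub_C_mul_derivative_X_sub_C_pow_mul α b g
  simp only [weightedWronskian]
  linear_combination (p : R[X]) * (X - C α) ^ b * g * hf - (q : R[X]) * (X - C α) ^ a * f * hg

variable [IsDomain R] {f g : R[X]}

theorem rootMultiplicity_add_le_weightedWronskian (hW : weightedWronskian p q f g ≠ 0) (α : R) :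
    f.rootMultiplicity α + g.rootMultiplicity α ≤
      (weightedWronskian p q f g).rootMultiplicity α + 1 := by
  obtain ⟨f₁, hf₁⟩ := pow_rootMultiplicity_dvd f α
  obtain ⟨g₁, hg₁⟩ := pow_rootMultiplicity_dvd g α
  rw [← rootMultiplicity_X_sub_C_mul hW,
    le_rootMultiplicity_iff (mul_ne_zero (X_sub_C_ne_zero α) hW)]
  have hfactor := X_sub_C_mul_weightedWronskian (p := p) (q := q) α (f.rootMultiplicity α)
    (g.rootMultiplicity α) f₁ g₁
  rw [← hf₁, ← hg₁] at hfactor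
  exact Dvd.intro _ hfactor.symm

theorem rootMultiplicity_weightedWronskian [CharZero R] (hW : weightedWronskian p q f g ≠ 0)
    {α : R} (hα : p * f.rootMultiplicity α ≠ q * g.rootMultiplicity α) :
    (weightedWronskian p q f g).rootMultiplicity α + 1 =
      f.rootMultiplicity α + g.rootMultiplicity α := by
  have hf : f ≠ 0 := by rintro rfl; simp [weightedWronskian] at hW
  have hg : g ≠ 0 := by rintro rfl; simp [weightedWronskian] at hW
  obtain ⟨f₁, hf₁, hf₁α⟩ := exists_eq_pow_rootMultiplicity_mul_and_not_dvd f hf α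
  obtain ⟨g₁, hg₁, hg₁α⟩ := exists_eq_pow_rootMultiplicity_mul_and_not_dvd g hg α
  rw [dvd_iff_isRoot, IsRoot.def] at hf₁α hg₁α
  have hfactor := X_sub_C_mul_weightedWronskian (p := p) (q := q) α (f.rootMultiplicity α)
    (g.rootMultiplicity α) f₁ g₁
  rw [← hf₁, ← hg₁] at hfactor
  have hne := mul_ne_zero (X_sub_C_ne_zero α) hW
  rw [← rootMultiplicity_X_sub_C_mul hW, hfactor, rootMultiplicity_mul (hfactor ▸ hne),
    rootMultiplicity_X_sub_C_pow, Nat.add_eq_left]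
  apply rootMultiplicity_eq_zero
  have hcast : (p * f.rootMultiplicity α - q * g.rootMultiplicity α : R) ≠ 0 :=
    sub_ne_zero.2 (mod_cast hα)
  simpa using ⟨hcast, hf₁α, hg₁α⟩

end WeightedWronskian

/-- The differential system behind Davenport's problem. If `A ^ 3 - B ^ 2` is a constant multiple of
`K`, its Wronskian with `K` vanishes, that is,
`A ^ 2 * (3 * A' * K - A * K') = B * (2 * B' * K - B * K')`. For coprime `A` and `B` the two
factors are then multiples of `B` and `A ^ 2`, and comparing degrees shows that the common
cofactor is a constant `l`. -/
structure DavenportSystem {R : Type*} [CommRing R] (l : R) (K A B : R[X]) : Prop where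
  fst : weightedWronskian 3 1 A K = C l * B
  snd : weightedWronskian 2 1 B K = C l * A ^ 2

theorem DavenportSystem.wronskian_eq_zero {R : Type*} [CommRing R] {l : R} {K A B : R[X]}
    (h : DavenportSystem l K A B) : wronskian (A ^ 3 - B ^ 2) K = 0 := by
  obtain ⟨hfst, hsnd⟩ := h
  simp only [weightedWronskian, Nat.cast_ofNat, Nat.cast_one, one_mul] at hfst hsnd
  simp only [wronskian, derivative_sub, derivative_pow, Nat.cast_ofNat, map_ofNat,
    Nat.add_one_sub_one, pow_one]
  linear_combination B * hsnd - A ^ 2 * hfst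

theorem C_mul_weightedWronskian_eq_davenportOperator {R : Type*} [CommRing R] {l : R}
    {K A B : R[X]} (hB : weightedWronskian 3 1 A K = C l * B) :
    C l * weightedWronskian 2 1 B K = K * davenportOperator K A + A * derivative K ^ 2 := by
  have hB' := congrArg derivative hB
  simp only [weightedWronskian, Nat.cast_ofNat, Nat.cast_one, one_mul, derivative_sub,
    derivative_mul, derivative_ofNat, derivative_C] at hB hB'
  simp only [weightedWronskian, davenportOperator, Function.iterate_succ_apply,
    Function.iterate_zero_apply, Nat.cast_ofNat, Nat.cast_one, one_mul]
  linear_combination derivative K * hB - 2 * K * hB'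

section RootMultiplicities

variable {F : Type*} [Field F] {l : F} {K A B : F[X]}

theorem DavenportSystem.isCoprime [IsAlgClosed F] (h : DavenportSystem l K A B) (hl : l ≠ 0)
    (hA : A ≠ 0) (hB : B ≠ 0) (hK : K ≠ 0) {c : F} (hc : c ≠ 0) (hcK : A ^ 3 - B ^ 2 = C c * K) :
    IsCoprime A B := by
  refine (isCoprime_iff_aeval_ne_zero_of_isAlgClosed (k := F) F A B).2 fun α => ?_
  by_contra! hroot
  simp only [coe_aeval_eq_eval] at hroot
  have ha : 0 < A.rootMultiplicity α := (rootMultiplicity_pos hA).2 hroot.1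
  have hb : 0 < B.rootMultiplicity α := (rootMultiplicity_pos hB).2 hroot.2
  have hfst : A.rootMultiplicity α + K.rootMultiplicity α ≤ B.rootMultiplicity α + 1 := by
    have := rootMultiplicity_add_le_weightedWronskian
      (h.fst ▸ mul_ne_zero (C_ne_zero.2 hl) hB) α
    rwa [h.fst, rootMultiplicity_C_mul hl] at this
  have hsnd : B.rootMultiplicity α + K.rootMultiplicity α ≤ 2 * A.rootMultiplicity α + 1 := by
    have := rootMultiplicity_add_le_weightedWronskian
      (h.snd ▸ mul_ne_zero (C_ne_zero.2 hl) (pow_ne_zero 2 hA)) α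
    rwa [h.snd, rootMultiplicity_C_mul hl, rootMultiplicity_pow] at this
  have hmin : min (3 * A.rootMultiplicity α) (2 * B.rootMultiplicity α) ≤
      K.rootMultiplicity α := by
    rw [← rootMultiplicity_pow, ← rootMultiplicity_pow, ← rootMultiplicity_C_mul hc K, ← hcK]
    exact (le_rootMultiplicity_iff (hcK ▸ mul_ne_zero (C_ne_zero.2 hc) hK)).2 <| dvd_sub
      ((pow_dvd_pow _ (min_le_left _ _)).trans (pow_rootMultiplicity_dvd _ α))
      ((pow_dvd_pow _ (min_le_right _ _)).trans (pow_rootMultiplicity_dvd _ α))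
  omega

theorem two_mul_rootMultiplicity_of_cube_eq_sq [CharZero F]
    (hW : weightedWronskian 3 1 A K = C l * B) (hl : l ≠ 0) (hcube : A ^ 3 = B ^ 2) (hA : A ≠ 0)
    {α : F} (hα : A.IsRoot α) : 2 * K.rootMultiplicity α = A.rootMultiplicity α + 2 := by
  have hB : B ≠ 0 := by
    rintro rfl
    exact pow_ne_zero 3 hA (hcube.trans (zero_pow two_ne_zero))
  have hW0 : weightedWronskian 3 1 A K ≠ 0 := hW ▸ mul_ne_zero (C_ne_zero.2 hl) hB
  have ha : 0 < A.rootMultiplicity α := (rootMultiplicity_pos hA).2 hα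
  have hab : 3 * A.rootMultiplicity α = 2 * B.rootMultiplicity α := by
    rw [← rootMultiplicity_pow, ← rootMultiplicity_pow, hcube]
  have hle := rootMultiplicity_add_le_weightedWronskian hW0 α
  rw [hW, rootMultiplicity_C_mul hl] at hle
  have heq := rootMultiplicity_weightedWronskian hW0 (α := α) (by omega)
  rw [hW, rootMultiplicity_C_mul hl] at heq
  omega

theorem roots_add_two_nsmul_dedup_le_of_cube_eq_sq [DecidableEq F] [CharZero F]
    (hW : weightedWronskian 3 1 A K = C l * B) (hl : l ≠ 0) (hcube : A ^ 3 = B ^ 2) (hA : A ≠ 0) :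
    A.roots + 2 • A.roots.dedup ≤ 2 • K.roots := by
  refine Multiset.le_iff_count.2 fun α => ?_
  rw [Multiset.count_add, Multiset.count_nsmul, Multiset.count_nsmul, Multiset.count_dedup,
    count_roots, count_roots]
  split_ifs with hα
  · exact (two_mul_rootMultiplicity_of_cube_eq_sq hW hl hcube hA (isRoot_of_mem_roots hα)).ge
  · simp [← count_roots, Multiset.count_eq_zero.2 hα]

theorem exists_eq_X_sub_C_pow_of_cube_eq_sq [IsAlgClosed F] [CharZero F] {k : ℕ}
    (hW : weightedWronskian 3 1 A K = C l * B) (hl : l ≠ 0) (hcube : A ^ 3 = B ^ 2)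
    (hA : A.Monic) (hAdeg : A.natDegree = 2 * k) (hk : k ≠ 0) (hK : K.Monic)
    (hKdeg : K.natDegree = k + 1) : ∃ α, A = (X - C α) ^ (2 * k) ∧ K = (X - C α) ^ (k + 1) := by
  classical
  have hAcard : A.roots.card = 2 * k := by
    rw [← hAdeg, splits_iff_card_roots.1 (IsAlgClosed.splits A)]
  have hcard : A.roots.toFinset.card = 1 := by
    have hle : 2 * k + 2 * A.roots.toFinset.card ≤ 2 * (k + 1) := by
      calc 2 * k + 2 * A.roots.toFinset.card
          = (A.roots + 2 • A.roots.dedup).card := by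
            rw [Multiset.card_add, Multiset.card_nsmul, hAcard, Multiset.card_toFinset]
        _ ≤ (2 • K.roots).card := Multiset.card_le_card
          (roots_add_two_nsmul_dedup_le_of_cube_eq_sq hW hl hcube hA.ne_zero)
        _ = 2 * K.roots.card := Multiset.card_nsmul _ _
        _ ≤ 2 * (k + 1) := Nat.mul_le_mul_left 2 (hKdeg ▸ card_roots' K)
    have hpos : 0 < A.roots.toFinset.card := by
      rw [Finset.card_pos, Multiset.toFinset_nonempty, ← Multiset.card_pos, hAcard]
      omega
    omega
  obtain ⟨-, α, hα⟩ := (Multiset.toFinset_card_eq_one_iff _).1 hcard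
  have hAα : A.rootMultiplicity α = 2 * k := by
    rw [← count_roots, hα, Multiset.count_nsmul, Multiset.count_singleton_self, mul_one, hAcard]
  have hKα : K.rootMultiplicity α = k + 1 := by
    have hroot : A.IsRoot α := (rootMultiplicity_pos hA.ne_zero).1 (by omega)
    have := two_mul_rootMultiplicity_of_cube_eq_sq hW hl hcube hA.ne_zero hroot
    omega
  exact ⟨α, hAdeg ▸ eq_X_sub_C_pow_of_natDegree_le_rootMultiplicity hA (by omega),
    hKdeg ▸ eq_X_sub_C_pow_of_natDegree_le_rootMultiplicity hK (by omega)⟩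

end RootMultiplicities

section Construction

variable {F : Type*} [Field F] {n : ℕ} {l : F} {K E A B : F[X]}

theorem davenportSystem_of_davenportObstruction_eq_zero (hl : l ≠ 0)
    (hobs : davenportObstruction K E = 0) (hA : C l ^ 2 * A = derivative K ^ 2 + K * E)
    (hB : weightedWronskian 3 1 A K = C l * B) : DavenportSystem l K A B := by
  refine ⟨hB, mul_left_cancel₀ (pow_ne_zero 3 (C_ne_zero.2 hl)) ?_⟩
  have hoperator : C l ^ 2 * davenportOperator K A = C l ^ 2 * A * E := by
    rw [← C_pow, ← davenportOperator_C_mul, C_pow, hA, davenportOperator_sq_add_mul, hobs,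
      mul_zero, sub_zero]
  calc C l ^ 3 * weightedWronskian 2 1 B K
      = C l ^ 2 * (C l * weightedWronskian 2 1 B K) := by ring
    _ = K * (C l ^ 2 * davenportOperator K A) + C l ^ 2 * A * derivative K ^ 2 := by
      rw [C_mul_weightedWronskian_eq_davenportOperator hB]
      ring
    _ = C l ^ 2 * A * (derivative K ^ 2 + K * E) := by
      rw [hoperator]
      ring
    _ = C l ^ 3 * (C l * A ^ 2) := by
      rw [← hA]
      ring

theorem IsDavenportPair.natDegree_sq_add_mul_le (h : IsDavenportPair n K E) :
    (derivative K ^ 2 + K * E).natDegree ≤ 2 * (n + 1) := by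
  have hK := h.natDegree_eq.le
  rw [sq]
  refine natDegree_add_le_of_degree_le ?_ ?_
  · exact natDegree_iterate_derivative_mul_le (i := 1) (j := 1) hK hK (by omega)
  · exact natDegree_iterate_derivative_mul_le (i := 0) (j := 0) hK h.natDegree_le (by omega)

theorem IsDavenportPair.coeff_sq_add_mul (h : IsDavenportPair n K E) :
    (derivative K ^ 2 + K * E).coeff (2 * (n + 1)) = (5 * n + 4) ^ 2 := by
  have hK := h.natDegree_eq.le
  have hKtop : K.coeff (n + 2) = 1 := h.natDegree_eq ▸ h.monic.coeff_natDegree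
  have hK'K' := coeff_iterate_derivative_mul (i := 1) (j := 1) (N := 2 * (n + 1)) hK hK (by omega)
  have hKE := coeff_iterate_derivative_mul (i := 0) (j := 0) (N := 2 * (n + 1)) hK h.natDegree_le
    (by omega)
  simp only [Function.iterate_zero_apply, Function.iterate_one, Nat.descFactorial_zero,
    Nat.descFactorial_one, hKtop, h.coeff_eq] at hK'K' hKE
  rw [sq, coeff_add, hK'K', hKE]
  push_cast
  ring

theorem IsDavenportPair.exists_davenportSystem [CharZero F] (h : IsDavenportPair n K E) :
    ∃ A B : F[X], A.Monic ∧ B.Monic ∧ A.natDegree = 2 * (n + 1) ∧ B.natDegree = 3 * (n + 1) ∧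
      DavenportSystem (5 * n + 4 : F) K A B ∧
      C (5 * n + 4 : F) ^ 2 * A = derivative K ^ 2 + K * E := by
  have hl : (5 * n + 4 : F) ≠ 0 := mod_cast (by omega : 5 * n + 4 ≠ 0)
  have hKtop : K.coeff (n + 2) = 1 := h.natDegree_eq ▸ h.monic.coeff_natDegree
  let A : F[X] := C ((5 * n + 4 : F) ^ 2)⁻¹ * (derivative K ^ 2 + K * E)
  let B : F[X] := C (5 * n + 4 : F)⁻¹ * weightedWronskian 3 1 A K
  have hAdeg : A.natDegree ≤ 2 * (n + 1) :=
    (natDegree_C_mul_le _ _).trans h.natDegree_sq_add_mul_le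
  have hAtop : A.coeff (2 * (n + 1)) = 1 := by
    rw [coeff_C_mul, h.coeff_sq_add_mul, inv_mul_cancel₀ (pow_ne_zero 2 hl)]
  have hN : 3 * (n + 1) + 1 = 2 * (n + 1) + (n + 2) := by omega
  have hBdeg : B.natDegree ≤ 3 * (n + 1) :=
    (natDegree_C_mul_le _ _).trans (natDegree_weightedWronskian_le hAdeg h.natDegree_eq.le hN)
  have hBtop : B.coeff (3 * (n + 1)) = 1 := by
    rw [coeff_C_mul, coeff_weightedWronskian hAdeg h.natDegree_eq.le hN, hAtop, hKtop,
      inv_mul_eq_one₀ hl]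
    push_cast
    ring
  have hA : C (5 * n + 4 : F) ^ 2 * A = derivative K ^ 2 + K * E := by
    rw [← C_pow, ← mul_assoc, ← C_mul, mul_inv_cancel₀ (pow_ne_zero 2 hl), C_1, one_mul]
  have hB : weightedWronskian 3 1 A K = C (5 * n + 4 : F) * B := by
    rw [← mul_assoc, ← C_mul, mul_inv_cancel₀ hl, C_1, one_mul]
  exact ⟨A, B, monic_of_natDegree_le_of_coeff_eq_one _ hAdeg hAtop,
    monic_of_natDegree_le_of_coeff_eq_one _ hBdeg hBtop,
    natDegree_eq_of_le_of_coeff_ne_zero hAdeg (hAtop ▸ one_ne_zero),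
    natDegree_eq_of_le_of_coeff_ne_zero hBdeg (hBtop ▸ one_ne_zero),
    davenportSystem_of_davenportObstruction_eq_zero hl h.obstruction_eq_zero hA hB, hA⟩

theorem IsDavenportPair.eq_X_pow_and_eq_monomial_of_cube_eq_sq [IsAlgClosed F] [CharZero F]
    (h : IsDavenportPair n K E) (hsys : DavenportSystem (5 * n + 4 : F) K A B)
    (hKE : C (5 * n + 4 : F) ^ 2 * A = derivative K ^ 2 + K * E) (hA : A.Monic)
    (hAdeg : A.natDegree = 2 * (n + 1)) (hcube : A ^ 3 = B ^ 2) (hnext : K.coeff (n + 1) = 0) :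
    K = X ^ (n + 2) ∧ E = monomial n (12 * (n + 1) * (2 * n + 1) : F) := by
  have hl : (5 * n + 4 : F) ≠ 0 := mod_cast (by omega : 5 * n + 4 ≠ 0)
  obtain ⟨α, hAα, hKα⟩ := exists_eq_X_sub_C_pow_of_cube_eq_sq hsys.fst hl hcube hA hAdeg
    n.succ_ne_zero h.monic h.natDegree_eq
  obtain rfl : α = 0 := eq_zero_of_coeff_X_sub_C_pow_eq_zero (hKα ▸ hnext)
  rw [C_0, sub_zero] at hAα hKα
  refine ⟨hKα, mul_left_cancel₀ h.monic.ne_zero ?_⟩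
  rw [← sub_eq_of_eq_add' hKE, hKα, hAα, ← C_mul_X_pow_eq_monomial, derivative_X_pow]
  simp only [map_add, map_mul, map_ofNat, map_natCast, map_one, Nat.add_one_sub_one]
  push_cast
  ring

end Construction

theorem stmt4_general {F : Type*} [Field F] [IsAlgClosed F] [CharZero F] (k : ℕ) (hk : 1 ≤ k) :
    ∃ A B : F[X], A.Monic ∧ B.Monic ∧ IsCoprime A B ∧
      A.natDegree = 2 * k ∧ B.natDegree = 3 * k ∧
      (A ^ 3 - B ^ 2).natDegree = k + 1 := by
  obtain ⟨n, rfl⟩ := Nat.exists_eq_add_of_le' hk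
  obtain ⟨K, E, hpair, hnext, hnontrivial⟩ := exists_isDavenportPair F n
  obtain ⟨A, B, hA, hB, hAdeg, hBdeg, hsys, hKE⟩ := hpair.exists_davenportSystem
  have hK : K ≠ 0 := hpair.monic.ne_zero
  have hl : (5 * n + 4 : F) ≠ 0 := mod_cast (by omega : 5 * n + 4 ≠ 0)
  obtain ⟨c, hc⟩ := exists_eq_C_mul_of_wronskian_eq_zero hK hsys.wronskian_eq_zero
  have hc0 : c ≠ 0 := by
    rintro rfl
    rw [C_0, zero_mul, sub_eq_zero] at hc
    exact hnontrivial (hpair.eq_X_pow_and_eq_monomial_of_cube_eq_sq hsys hKE hA hAdeg hc hnext)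
  refine ⟨A, B, hA, hB, hsys.isCoprime hl hA.ne_zero hB.ne_zero hK hc0 hc, hAdeg, hBdeg, ?_⟩
  rw [hc, natDegree_C_mul hc0, hpair.natDegree_eq]

/-- Stothers's 1981 theorem: Davenport's bound `deg (A³ - B²) ≥ k + 1` is
attained for every `k ≥ 1`. -/
theorem stmt4 (k : ℕ) (hk : 1 ≤ k) :
    ∃ A B : ℂ[X], A.Monic ∧ B.Monic ∧ IsCoprime A B ∧
      A.natDegree = 2 * k ∧ B.natDegree = 3 * k ∧
      (A ^ 3 - B ^ 2).natDegree = k + 1 :=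
  stmt4_general k hk
end

section
/- Let n ≥ 1 and let α = (α_1, …, α_p) and β = (β_1, …, β_q) be partitions of n with p and q parts respectively, and let d = gcd(α, β) (so d divides n). Suppose p + q > n/d + 1. Then for every pair of coprime polynomials P, Q ∈ ℂ[X] with factorization patterns α and β respectively, one has P ≠ Q and deg(P − Q) ≥ (d − 1)·n/d. -/
open Polynomial

/-!
Since `d` divides every part, `P = c f ^ d` and `Q = c' g ^ d` with `f`, `g` monic of degree
`m = n / d`. If `c ≠ c'`, the leading terms do not cancel and `deg (P - Q) = n`. If `c = c'`, then
`P - Q = c (f - g) ∑ f ^ i g ^ (d - 1 - i)`, and the sum consists of `d` monic polynomials of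
degree `(d - 1) m`; its leading coefficient is `d`, nonzero in characteristic zero, so it has
exactly that degree, while `f - g ≠ 0`.
-/

section Semiring

variable {R : Type*} [Semiring R] {f g : R[X]}

theorem coeff_geom_sum₂_of_monic (hf : f.Monic) (hg : g.Monic)
    (hfg : f.natDegree = g.natDegree) (d : ℕ) :
    (∑ i ∈ Finset.range d, f ^ i * g ^ (d - 1 - i)).coeff ((d - 1) * f.natDegree) = d := by
  have coeff_term : ∀ i ∈ Finset.range d,
      (f ^ i * g ^ (d - 1 - i)).coeff ((d - 1) * f.natDegree) = 1 := by
    intro i hi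
    have hsum : i + (d - 1 - i) = d - 1 := by
      have := Finset.mem_range.mp hi
      omega
    have hdeg : (f ^ i * g ^ (d - 1 - i)).natDegree = (d - 1) * f.natDegree := by
      rw [(hf.pow i).natDegree_mul (hg.pow _), hf.natDegree_pow, hg.natDegree_pow, ← hfg,
        ← add_mul, hsum]
    exact hdeg ▸ ((hf.pow i).mul (hg.pow _)).coeff_natDegree
  rw [finsetSum_coeff, Finset.sum_congr rfl coeff_term]
  simp

end Semiring

section Ring

variable {R : Type*} [Ring R] {F G : R[X]}

theorem natDegree_le_natDegree_C_mul_sub_C_mul (hF : F.Monic) (hG : G.Monic)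
    (hFG : F.natDegree = G.natDegree) {c c' : R} (hc : c ≠ c') :
    F.natDegree ≤ (C c * F - C c' * G).natDegree := by
  apply le_natDegree_of_ne_zero
  have hGcoeff : G.coeff F.natDegree = 1 := hFG ▸ hG.coeff_natDegree
  rw [coeff_sub, coeff_C_mul, coeff_C_mul, hF.coeff_natDegree, hGcoeff, mul_one, mul_one]
  exact sub_ne_zero.mpr hc

end Ring

section Domain

variable {R : Type*} [CommRing R] [IsDomain R] {f g : R[X]} {d : ℕ}

theorem le_natDegree_pow_sub_pow (hf : f.Monic) (hg : g.Monic)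
    (hfg : f.natDegree = g.natDegree) (hd : (d : R) ≠ 0) (hne : f ^ d ≠ g ^ d) :
    (d - 1) * f.natDegree ≤ (f ^ d - g ^ d).natDegree := by
  have hfactor := (Commute.all f g).geom_sum₂_mul d
  have hne_zero : (∑ i ∈ Finset.range d, f ^ i * g ^ (d - 1 - i)) * (f - g) ≠ 0 :=
    hfactor ▸ sub_ne_zero.mpr hne
  calc (d - 1) * f.natDegree
      ≤ (∑ i ∈ Finset.range d, f ^ i * g ^ (d - 1 - i)).natDegree :=
        le_natDegree_of_ne_zero (by rwa [coeff_geom_sum₂_of_monic hf hg hfg])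
    _ ≤ ((∑ i ∈ Finset.range d, f ^ i * g ^ (d - 1 - i)) * (f - g)).natDegree :=
        natDegree_le_of_dvd (dvd_mul_right _ _) hne_zero
    _ = (f ^ d - g ^ d).natDegree := by rw [hfactor]

theorem le_natDegree_C_mul_pow_sub_C_mul_pow (hf : f.Monic) (hg : g.Monic)
    (hfg : f.natDegree = g.natDegree) (hd : (d : R) ≠ 0) {c c' : R}
    (hne : C c * f ^ d ≠ C c' * g ^ d) :
    (d - 1) * f.natDegree ≤ (C c * f ^ d - C c' * g ^ d).natDegree := by
  rcases eq_or_ne c c' with rfl | hcc'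
  · have hc : c ≠ 0 := by
      rintro rfl
      simp at hne
    rw [← mul_sub, natDegree_C_mul hc]
    exact le_natDegree_pow_sub_pow hf hg hfg hd fun h => hne (by rw [h])
  · have hpow : (f ^ d).natDegree = (g ^ d).natDegree := by
      rw [hf.natDegree_pow, hg.natDegree_pow, hfg]
    calc (d - 1) * f.natDegree
        ≤ d * f.natDegree := Nat.mul_le_mul_right _ (Nat.sub_le d 1)
      _ = (f ^ d).natDegree := (hf.natDegree_pow d).symm
      _ ≤ _ := natDegree_le_natDegree_C_mul_sub_C_mul (hf.pow d) (hg.pow d) hpow hcc'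

end Domain

section Factorization

variable {R ι : Type*} [CommRing R] [Fintype ι]

theorem monic_prod_X_sub_C_pow (a : ι → R) (α : ι → ℕ) :
    (∏ i, (X - C (a i)) ^ α i).Monic :=
  monic_prod_of_monic _ _ fun i _ => (monic_X_sub_C (a i)).pow (α i)

theorem natDegree_prod_X_sub_C_pow [Nontrivial R] (a : ι → R) (α : ι → ℕ) :
    (∏ i, (X - C (a i)) ^ α i).natDegree = ∑ i, α i := by
  rw [natDegree_prod_of_monic _ _ fun i _ => (monic_X_sub_C (a i)).pow (α i)]
  exact Finset.sum_congr rfl fun i _ => by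
    rw [(monic_X_sub_C (a i)).natDegree_pow, natDegree_X_sub_C, mul_one]

theorem exists_monic_pow_eq_prod_X_sub_C_pow [Nontrivial R] (a : ι → R) {α : ι → ℕ} {d : ℕ}
    (hd : ∀ i, d ∣ α i) :
    ∃ f : R[X], f.Monic ∧ d * f.natDegree = ∑ i, α i ∧ f ^ d = ∏ i, (X - C (a i)) ^ α i := by
  have hf := monic_prod_X_sub_C_pow a (α · / d)
  have hpow : (∏ i, (X - C (a i)) ^ (α i / d)) ^ d = ∏ i, (X - C (a i)) ^ α i := by
    simp only [← Finset.prod_pow, ← pow_mul, Nat.div_mul_cancel (hd _)]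
  exact ⟨_, hf, by rw [← hf.natDegree_pow, hpow, natDegree_prod_X_sub_C_pow], hpow⟩

end Factorization

theorem ne_of_isCoprime_of_monic_dvd {R : Type*} [CommRing R] {F P Q : R[X]} (hF : F.Monic)
    (hdeg : F.natDegree ≠ 0) (hFP : F ∣ P) (hPQ : IsCoprime P Q) : P ≠ Q := by
  rintro rfl
  have hunit : IsUnit F := isUnit_of_dvd_unit hFP (isCoprime_self.mp hPQ)
  exact hdeg (by rw [hF.isUnit_iff.mp hunit, natDegree_one])

theorem dvd_and_dvd_of_eq_gcd_gcd {ι κ : Type*} [Fintype ι] [Fintype κ] {α : ι → ℕ} {β : κ → ℕ}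
    {d : ℕ} (hd : d = Nat.gcd (Finset.univ.gcd α) (Finset.univ.gcd β)) :
    (∀ i, d ∣ α i) ∧ ∀ j, d ∣ β j := by
  subst hd
  exact ⟨fun i => (Nat.gcd_dvd_left _ _).trans (Finset.gcd_dvd (Finset.mem_univ i)),
    fun j => (Nat.gcd_dvd_right _ _).trans (Finset.gcd_dvd (Finset.mem_univ j))⟩

theorem stmt6_general {R ι κ : Type*} [CommRing R] [IsDomain R] [Fintype ι] [Fintype κ]
    {n d : ℕ} (hn : n ≠ 0) (hd : (d : R) ≠ 0) {α : ι → ℕ} {β : κ → ℕ}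
    (hdα : ∀ i, d ∣ α i) (hdβ : ∀ j, d ∣ β j) (hα : ∑ i, α i = n) (hβ : ∑ j, β j = n)
    {P Q : R[X]} {c c' : R} {a : ι → R} {b : κ → R}
    (hP : P = C c * ∏ i, (X - C (a i)) ^ α i) (hQ : Q = C c' * ∏ j, (X - C (b j)) ^ β j)
    (hPQ : IsCoprime P Q) :
    P ≠ Q ∧ (d - 1) * (n / d) ≤ (P - Q).natDegree := by
  have hne : P ≠ Q := ne_of_isCoprime_of_monic_dvd (monic_prod_X_sub_C_pow a α)
    (by rwa [natDegree_prod_X_sub_C_pow, hα]) (hP ▸ dvd_mul_left _ _) hPQ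
  have hd_pos : 0 < d := Nat.pos_of_ne_zero fun h => hd (by rw [h, Nat.cast_zero])
  obtain ⟨f, hf, hf_deg, hf_pow⟩ := exists_monic_pow_eq_prod_X_sub_C_pow a hdα
  obtain ⟨g, hg, hg_deg, hg_pow⟩ := exists_monic_pow_eq_prod_X_sub_C_pow b hdβ
  have hfg : f.natDegree = g.natDegree :=
    Nat.eq_of_mul_eq_mul_left hd_pos (by rw [hf_deg, hg_deg, hα, hβ])
  have hquot : n / d = f.natDegree := Nat.div_eq_of_eq_mul_right hd_pos (by rw [hf_deg, hα])
  rw [← hf_pow] at hP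
  rw [← hg_pow] at hQ
  subst hP hQ
  exact ⟨hne, hquot ▸ le_natDegree_C_mul_pow_sub_C_mul_pow hf hg hfg hd hne⟩

/-- Zannier's weak bound: if `p + q > n/d + 1`, then any coprime `P, Q` with
factorization patterns `α, β` satisfy `P ≠ Q` and
`deg (P - Q) ≥ (d - 1)·n/d`. -/
theorem stmt6 (n p q d : ℕ) (hn : 1 ≤ n)
    (α : Fin p → ℕ) (β : Fin q → ℕ)
    (hα : ∀ i, 0 < α i) (hβ : ∀ j, 0 < β j)
    (hαsum : ∑ i, α i = n) (hβsum : ∑ j, β j = n)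
    (hd : d = Nat.gcd (Finset.univ.gcd α) (Finset.univ.gcd β))
    (hpq : n / d + 1 < p + q)
    (P Q : ℂ[X]) (c c' : ℂ) (hc : c ≠ 0) (hc' : c' ≠ 0)
    (a : Fin p → ℂ) (b : Fin q → ℂ)
    (ha : Function.Injective a) (hb : Function.Injective b)
    (hPdef : P = C c * ∏ i, (X - C (a i)) ^ α i)
    (hQdef : Q = C c' * ∏ j, (X - C (b j)) ^ β j)
    (hcop : IsCoprime P Q) :
    P ≠ Q ∧ (d - 1) * (n / d) ≤ (P - Q).natDegree := by
  obtain ⟨hdα, hdβ⟩ := dvd_and_dvd_of_eq_gcd_gcd hd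
  have hn_ne : n ≠ 0 := Nat.one_le_iff_ne_zero.mp hn
  have hd_ne : d ≠ 0 := ne_zero_of_dvd_ne_zero hn_ne (hαsum ▸ Finset.dvd_sum fun i _ => hdα i)
  exact stmt6_general hn_ne (Nat.cast_ne_zero.mpr hd_ne) hdα hdβ hαsum hβsum hPdef hQdef hcop
end
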